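/- Let m ≥ 0, r ≥ 0 and p₁,…,p_r ≥ 2 be integers, and let G = F ∗ (ℤ/p₁ℤ) ∗ ⋯ ∗ (ℤ/p_rℤ) be the free product of a free group F with free basis x₁,…,x_m and finite cyclic groups of orders p₁,…,p_r with generators s₁,…,s_r. Then every generating n-tuple of G satisfies n ≥ m + r and is Nielsen equivalent to a tuple of the form (x₁,…,x_m, s₁^{ν₁},…,s_r^{ν_r}, 1,…,1), where each ν_i is a positive integer with gcd(ν_i, p_i) = 1. -/

import Mathlib

/-!
Regard `T k` as the loop at `1` through its own edge of a finite connected graph (a *carrier*) whose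
vertices lie in `G`, whose edges are labelled by elements of the free factors, and in which vertices
in a common coset of a factor count as adjacent. Nielsen moves on `T` allow parts of the graph to be
translated, and a carrier with the fewest vertices over the Nielsen class of `T` is folded in the
sense of Stallings: each factor acts partially on the vertices. Extending these partial actions to
permutations of a larger set gives an action of the free product in which `T`, hence all of `G`,
fixes the vertex `1`; but `G` also moves that vertex to every other one. So `1` is the only vertex,
and every entry of `T` lies in a factor. This is Grushko's theorem.

Treating a free group of rank `m` as `m` infinite cyclic factors, Euclid's algorithm on exponents
then leaves at most one nontrivial entry in each factor. Projecting to a factor shows that this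
entry generates it, so its exponent is coprime to the order, which for order `0` means equal to `1`.
-/

/-- An elementary Nielsen transformation on an `n`-tuple of elements of a group:
(T1) invert an entry, (T2) swap two distinct entries, (T3) replace an entry by its
product with another (distinct) entry. -/
inductive NielsenStep {G : Type*} [Group G] {n : ℕ} : (Fin n → G) → (Fin n → G) → Prop
  | inv (T : Fin n → G) (i : Fin n) : NielsenStep T (Function.update T i (T i)⁻¹)
  | swap (T : Fin n → G) (i j : Fin n) (hij : i ≠ j) : NielsenStep T (T ∘ Equiv.swap i j)
  | mul (T : Fin n → G) (i j : Fin n) (hij : i ≠ j) :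
      NielsenStep T (Function.update T i (T i * T j))

/-- Two `n`-tuples of elements of a group are Nielsen equivalent if a finite chain of
elementary Nielsen transformations carries one to the other. -/
def NielsenEquiv {G : Type*} [Group G] {n : ℕ} (T T' : Fin n → G) : Prop :=
  Relation.ReflTransGen NielsenStep T T'

/-- The family consisting of a free group of rank `m` (index `none`) and finite cyclic
groups of orders `p₁, …, p_r` (indices `some i`). -/
def FPFactor (m r : ℕ) (p : Fin r → ℕ) : Option (Fin r) → Type :=
  fun o => match o with
  | none => FreeGroup (Fin m)
  | some i => Multiplicative (ZMod (p i))

instance instGroupFPFactor (m r : ℕ) (p : Fin r → ℕ) :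
    ∀ o : Option (Fin r), Group (FPFactor m r p o)
  | none => inferInstanceAs (Group (FreeGroup (Fin m)))
  | some i => inferInstanceAs (Group (Multiplicative (ZMod (p i))))

open Function

namespace NielsenEquiv

variable {G : Type*} [Group G] {n : ℕ} {T T' T'' : Fin n → G}

@[refl]
theorem refl (T : Fin n → G) : NielsenEquiv T T :=
  Relation.ReflTransGen.refl

@[trans]
theorem trans (h : NielsenEquiv T T') (h' : NielsenEquiv T' T'') : NielsenEquiv T T'' :=
  Relation.ReflTransGen.trans h h'

theorem update_inv (T : Fin n → G) (i : Fin n) : NielsenEquiv T (update T i (T i)⁻¹) :=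
  .single (.inv T i)

theorem update_mul (T : Fin n → G) {i j : Fin n} (hij : i ≠ j) :
    NielsenEquiv T (update T i (T i * T j)) :=
  .single (.mul T i j hij)

theorem update_mul_inv (T : Fin n → G) {i j : Fin n} (hij : i ≠ j) :
    NielsenEquiv T (update T i (T i * (T j)⁻¹)) := by
  have h := ((update_inv T j).trans (update_mul _ hij)).trans (update_inv _ j)
  rwa [update_self, update_of_ne hij, update_of_ne hij.symm, update_self, inv_inv,
    update_comm hij, update_idem, update_eq_self] at h

@[symm]
theorem symm (h : NielsenEquiv T T') : NielsenEquiv T' T := by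
  induction h with
  | refl => rfl
  | @tail U _ _ hs ih =>
    refine trans ?_ ih
    cases hs with
    | inv i => simpa using update_inv (update U i (U i)⁻¹) i
    | swap i j hij =>
      refine .single ?_
      simpa [comp_assoc, ← Equiv.Perm.coe_mul] using NielsenStep.swap (U ∘ Equiv.swap i j) i j hij
    | mul i j hij => simpa [hij.symm] using update_mul_inv (update U i (U i * U j)) hij

theorem comp_perm (T : Fin n → G) (π : Equiv.Perm (Fin n)) : NielsenEquiv T (T ∘ π) := by
  induction π using Equiv.Perm.swap_induction_on generalizing T with
  | one => exact refl T
  | swap_mul π i j hij ih => exact trans (.single (.swap T i j hij)) (ih _)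

theorem map {G' : Type*} [Group G'] (f : G →* G') (h : NielsenEquiv T T') :
    NielsenEquiv (f ∘ T) (f ∘ T') := by
  induction h with
  | refl => rfl
  | tail _ hs ih =>
    refine ih.trans (.single ?_)
    cases hs with
    | inv i => simpa [comp_update] using NielsenStep.inv (f ∘ _) i
    | swap i j hij => exact NielsenStep.swap (f ∘ _) i j hij
    | mul i j hij => simpa [comp_update] using NielsenStep.mul (f ∘ _) i j hij

theorem closure_le (h : NielsenEquiv T T') :
    Subgroup.closure (Set.range T') ≤ Subgroup.closure (Set.range T) := by
  induction h with
  | refl => exact le_rfl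
  | @tail U _ _ hs ih =>
    refine le_trans ?_ ih
    have hU (k) : U k ∈ Subgroup.closure (Set.range U) := Subgroup.subset_closure ⟨k, rfl⟩
    rw [Subgroup.closure_le, Set.range_subset_iff]
    intro k
    cases hs with
    | inv i =>
      rcases eq_or_ne k i with rfl | hk
      · simpa using hU k
      · simpa [hk] using hU k
    | swap i j hij => exact hU _
    | mul i j hij =>
      rcases eq_or_ne k i with rfl | hk
      · simpa using mul_mem (hU k) (hU j)
      · simpa [hk] using hU k

theorem closure_eq (h : NielsenEquiv T T') :
    Subgroup.closure (Set.range T') = Subgroup.closure (Set.range T) :=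
  le_antisymm h.closure_le h.symm.closure_le

theorem of_forall_update
    (h : ∀ (F : Finset (Fin n)), ∀ k ∉ F,
      NielsenEquiv (F.piecewise T' T) (update (F.piecewise T' T) k (T' k))) :
    NielsenEquiv T T' := by
  suffices ∀ F : Finset (Fin n), NielsenEquiv T (F.piecewise T' T) by
    simpa using this Finset.univ
  intro F
  induction F using Finset.induction_on with
  | empty => simpa using refl T
  | insert k F hk ih => simpa only [Finset.piecewise_insert] using ih.trans (h F k hk)

theorem of_eq_or_eq_inv (h : ∀ k, T' k = T k ∨ T' k = (T k)⁻¹) : NielsenEquiv T T' := by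
  refine of_forall_update fun F k hk => ?_
  have hTk : F.piecewise T' T k = T k := F.piecewise_eq_of_notMem _ _ hk
  rcases h k with hk | hk <;> rw [hk, ← hTk]
  · rw [update_eq_self]
  · exact update_inv _ k

theorem update_mul_right {S : Set (Fin n)} {k : Fin n} (hk : k ∉ S) (g : G) {r : G}
    (hr : r ∈ Subgroup.closure (T '' S)) : NielsenEquiv (update T k g) (update T k (g * r)) := by
  induction hr using Subgroup.closure_induction generalizing g with
  | mem _ hr =>
    obtain ⟨j, hj, rfl⟩ := hr
    have hkj : k ≠ j := fun h => hk (h ▸ hj)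
    simpa [hkj.symm] using update_mul (update T k g) hkj
  | one => rw [mul_one]
  | mul a b _ _ iha ihb => simpa only [mul_assoc] using (iha g).trans (ihb (g * a))
  | inv a _ iha => simpa using (iha (g * a⁻¹)).symm

theorem update_mul_left {S : Set (Fin n)} {k : Fin n} (hk : k ∉ S) (g : G) {l : G}
    (hl : l ∈ Subgroup.closure (T '' S)) : NielsenEquiv (update T k g) (update T k (l * g)) := by
  have hinv (x : G) : NielsenEquiv (update T k x) (update T k x⁻¹) := by
    simpa using update_inv (update T k x) k
  simpa using ((hinv g).trans (update_mul_right hk g⁻¹ (inv_mem hl))).trans (hinv _)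

theorem of_forall_mul {S : Set (Fin n)} {l r : Fin n → G} (hS : ∀ k ∈ S, T' k = T k)
    (hl : ∀ k, l k ∈ Subgroup.closure (T '' S)) (hr : ∀ k, r k ∈ Subgroup.closure (T '' S))
    (h : ∀ k ∉ S, T' k = l k * T k * r k) : NielsenEquiv T T' := by
  refine of_forall_update fun F k hk => ?_
  set U := F.piecewise T' T
  have hUk : U k = T k := F.piecewise_eq_of_notMem _ _ hk
  have hUS : U '' S = T '' S := Set.image_congr fun j hj => by
    by_cases hjF : j ∈ F <;> simp [U, hjF, hS j hj]
  by_cases hkS : k ∈ S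
  · rw [hS k hkS, ← hUk, update_eq_self]
  · rw [h k hkS]
    have hmul := (update_mul_left hkS (U k) (hUS ▸ hl k)).trans
      (update_mul_right hkS (l k * U k) (hUS ▸ hr k))
    rwa [update_eq_self, hUk] at hmul

theorem extend_one {K : Type*} [Finite K] {f g : K → Fin n} (hf : Injective f)
    (hg : Injective g) (a : K → G) :
    NielsenEquiv (extend f a 1) (extend g a 1) := by
  obtain ⟨π, hπ⟩ := Equiv.Perm.exists_extending_pair g f hg hf
  convert comp_perm (extend f a 1) π using 1
  funext i
  by_cases hi : ∃ k, g k = i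
  · obtain ⟨k, rfl⟩ := hi
    rw [hg.extend_apply, comp_apply, hπ, hf.extend_apply]
  · have hi' : ¬ ∃ k, f k = π i := fun ⟨k, hk⟩ => hi ⟨k, π.injective (by rw [hπ, hk])⟩
    rw [extend_apply' _ _ _ hi, comp_apply, extend_apply' _ _ _ hi', Pi.one_apply, Pi.one_apply]

end NielsenEquiv

namespace Grushko

section Reach

variable {G ι : Type*} [Group G]

/-- `Reach H X g` says that `g` can be reached from `1` by a walk that stays inside `X` and each of
whose steps is a right multiplication by an element of one of the subgroups `H i`. -/
inductive Reach (H : ι → Subgroup G) (X : Set G) : G → Prop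
  | one : 1 ∈ X → Reach H X 1
  | step {i : ι} {b c : G} : Reach H X b → b⁻¹ * c ∈ H i → c ∈ X → Reach H X c

namespace Reach

variable {H : ι → Subgroup G} {X Y P Q : Set G} {g : G}

theorem mem (hg : Reach H X g) : g ∈ X := by
  cases hg <;> assumption

theorem one_mem (hg : Reach H X g) : 1 ∈ X := by
  induction hg <;> assumption

theorem mono (hXY : X ⊆ Y) (hg : Reach H X g) : Reach H Y g := by
  induction hg with
  | one h => exact one (hXY h)
  | step _ hbc hc ih => exact ih.step hbc (hXY hc)

theorem within_reachable (hg : Reach H X g) : Reach H {a | Reach H X a} g := by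
  induction hg with
  | one h => exact one (one h)
  | step hb hbc hc ih => exact ih.step hbc (hb.step hbc hc)

theorem exists_crossing (hg : Reach H X g) (h1 : 1 ∈ Y) (hgY : ¬ Reach H Y g) :
    ∃ p q i, Reach H Y p ∧ q ∈ X ∧ ¬ Reach H Y q ∧ p⁻¹ * q ∈ H i := by
  induction hg with
  | one => exact absurd (one h1) hgY
  | @step i b c _ hbc hc ih =>
    by_cases hb : Reach H Y b
    · exact ⟨b, c, i, hb, hc, hgY, hbc⟩
    · exact ih hb

theorem exists_avoiding (hPQ : Disjoint P Q) (hg : Reach H X g) (hgPQ : g ∈ P ∪ Q) :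
    (∃ p ∈ P, Reach H (X \ Q) p) ∨ ∃ q ∈ Q, Reach H (X \ P) q := by
  by_cases h1 : 1 ∈ P ∪ Q
  · exact h1.imp (fun hP => ⟨1, hP, one ⟨hg.one_mem, hPQ.notMem_of_mem_left hP⟩⟩)
      fun hQ => ⟨1, hQ, one ⟨hg.one_mem, hPQ.notMem_of_mem_right hQ⟩⟩
  obtain ⟨b, c, i, hb, hcX, hc, hbc⟩ :=
    hg.exists_crossing (Y := X \ (P ∪ Q)) ⟨hg.one_mem, h1⟩ fun h => h.mem.2 hgPQ
  have hcPQ : c ∈ P ∪ Q := by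
    by_contra hcPQ
    exact hc (hb.step hbc ⟨hcX, hcPQ⟩)
  exact hcPQ.imp
    (fun hP => ⟨c, hP, (hb.mono (sdiff_le_sdiff_left le_sup_right)).step hbc
      ⟨hcX, hPQ.notMem_of_mem_left hP⟩⟩)
    fun hQ => ⟨c, hQ, (hb.mono (sdiff_le_sdiff_left le_sup_left)).step hbc
      ⟨hcX, hPQ.notMem_of_mem_right hQ⟩⟩

theorem iff_of_inv_mul_mem {i : ι} {g' : G} (hg : g ∈ X) (hg' : g' ∈ X) (h : g⁻¹ * g' ∈ H i) :
    Reach H X g ↔ Reach H X g' :=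
  ⟨fun hr => hr.step h hg', fun hr => hr.step (by simpa using inv_mem h) hg⟩

theorem iff_of_mk_eq {V : Set G} {i : ι} {c : G ⧸ H i} {v w : G} (hv : v ∈ V) (hw : w ∈ V)
    (hvw : (v : G ⧸ H i) = w) :
    Reach H (V \ {g | (g : G ⧸ H i) = c}) v ↔ Reach H (V \ {g | (g : G ⧸ H i) = c}) w := by
  by_cases hvc : (v : G ⧸ H i) = c
  · exact iff_of_false (fun h => h.mem.2 hvc) fun h => h.mem.2 (hvw.symm.trans hvc)
  · exact iff_of_inv_mul_mem ⟨hv, hvc⟩ ⟨hw, fun hwc => hvc (hvw.trans hwc)⟩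
      (QuotientGroup.eq.1 hvw)

theorem exists_finset (hH : ⨆ i, H i = ⊤) (g : G) : ∃ F : Finset G, Reach H F g := by
  classical
  have hg : g ∈ Subgroup.closure (⋃ i, (H i : Set G)) := by
    rw [← Subgroup.iSup_eq_closure, hH]
    exact Subgroup.mem_top g
  have hstep {b h : G} {i : ι} (hh : h ∈ H i) (hb : ∃ F : Finset G, Reach H F b) :
      ∃ F : Finset G, Reach H F (b * h) := by
    obtain ⟨F, hF⟩ := hb
    exact ⟨insert (b * h) F, (hF.mono (by simp)).step (i := i) (by simpa using hh) (by simp)⟩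
  induction hg using Subgroup.closure_induction_right with
  | one => exact ⟨{1}, one (by simp)⟩
  | mul_right b _ h hh hb =>
    obtain ⟨i, hi⟩ := Set.mem_iUnion.1 hh
    exact hstep hi hb
  | mul_inv_cancel b _ h hh hb =>
    obtain ⟨i, hi⟩ := Set.mem_iUnion.1 hh
    exact hstep (inv_mem hi) hb

end Reach

open scoped Classical in
/-- The left factor by which `g` is moved when everything outside `A` is translated by `h`. -/
noncomputable def shift (A : Set G) (h g : G) : G := if g ∈ A then 1 else h

/-- The map that fixes `A` pointwise and translates everything outside `A` by `h` on the left. -/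
noncomputable def slide (A : Set G) (h g : G) : G := shift A h g * g

section Slide

variable {A : Set G} {h g g' : G}

theorem shift_of_mem (hg : g ∈ A) : shift A h g = 1 := if_pos hg

theorem shift_of_notMem (hg : g ∉ A) : shift A h g = h := if_neg hg

theorem shift_mem {N : Subgroup G} (hh : h ∈ N) (g : G) : shift A h g ∈ N := by
  unfold shift
  split_ifs
  exacts [one_mem N, hh]

theorem slide_of_mem (hg : g ∈ A) : slide A h g = g := by
  rw [slide, shift_of_mem hg, one_mul]

theorem slide_of_notMem (hg : g ∉ A) : slide A h g = h * g := by
  rw [slide, shift_of_notMem hg]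

theorem slide_inv_mul_slide (hgg' : g ∈ A ↔ g' ∈ A) :
    (slide A h g)⁻¹ * slide A h g' = g⁻¹ * g' := by
  by_cases hg : g ∈ A
  · rw [slide_of_mem hg, slide_of_mem (hgg'.1 hg)]
  · rw [slide_of_notMem hg, slide_of_notMem (hgg'.not.1 hg)]
    group

end Slide

theorem Reach.slide_image {H : ι → Subgroup G} {V Q : Set G} {h g : G}
    (hQ : ∀ q ∈ V, q ∈ Q → ∃ a, Reach H (V \ Q) a ∧ ∃ i, a⁻¹ * (h * q) ∈ H i)
    (hg : Reach H V g) :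
    Reach H (slide {a | Reach H (V \ Q) a} h '' V)
      (slide {a | Reach H (V \ Q) a} h g) := by
  set A := {a | Reach H (V \ Q) a}
  have himage {a : G} (ha : a ∈ V) : slide A h a ∈ slide A h '' V :=
    Set.mem_image_of_mem _ ha
  have hA {a : G} (ha : a ∈ A) : Reach H (slide A h '' V) a :=
    ha.within_reachable.mono fun b hb => ⟨b, hb.mem.1, slide_of_mem hb⟩
  have hmem {c : G} (hc : c ∈ A) : Reach H (slide A h '' V) (slide A h c) := by
    simpa only [slide_of_mem hc] using hA hc
  have hout {c : G} (hcV : c ∈ V) (hcQ : c ∈ Q) :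
      Reach H (slide A h '' V) (slide A h c) := by
    obtain ⟨a, ha, i, hi⟩ := hQ c hcV hcQ
    have hc : c ∉ A := fun hc => hc.mem.2 hcQ
    exact (hA ha).step (by simpa only [slide_of_notMem hc] using hi) (himage hcV)
  induction hg with
  | one h1 =>
    by_cases h1Q : 1 ∈ Q
    · exact hout h1 h1Q
    · exact hmem (.one ⟨h1, h1Q⟩)
  | @step i b c _ hbc hcV ih =>
    by_cases hcA : c ∈ A
    · exact hmem hcA
    by_cases hcQ : c ∈ Q
    · exact hout hcV hcQ
    have hbA : b ∉ A := fun hb => hcA (Reach.step hb hbc ⟨hcV, hcQ⟩)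
    exact ih.step (by rwa [slide_inv_mul_slide (iff_of_false hbA hcA)]) (himage hcV)

end Reach

theorem card_image_lt_card_image {α β γ : Type*} [DecidableEq β] [DecidableEq γ] {s : Finset α}
    {f : α → β} {g : α → γ} (hfg : ∀ a ∈ s, ∀ b ∈ s, f a = f b → g a = g b) {a b : α}
    (ha : a ∈ s) (hb : b ∈ s) (hf : f a ≠ f b) (hg : g a = g b) :
    (s.image g).card < (s.image f).card := by
  have hfactors : (fun x : s => g x).FactorsThrough fun x : s => f x :=
    fun x y hxy => hfg x x.2 y y.2 hxy
  let e : β → γ := extend (fun x : s => f x) (fun x : s => g x) fun _ => g a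
  have he {x : α} (hx : x ∈ s) : e (f x) = g x := hfactors.extend_apply _ ⟨x, hx⟩
  have himage : s.image g = (s.image f).image e := by
    rw [Finset.image_image]
    exact Finset.image_congr fun x hx => (he hx).symm
  rw [himage]
  refine Finset.card_image_le.lt_of_ne fun hcard => hf ?_
  exact Finset.card_image_iff.1 hcard (Finset.mem_image_of_mem f ha) (Finset.mem_image_of_mem f hb)
    (by rw [he ha, he hb, hg])

section Carrier

variable {G ι : Type*} [Group G] {n : ℕ}

/-- A carrier of a tuple `T` with respect to subgroups `H i` is a finite set of vertices, each of
which can be reached from `1` inside that set, together with an edge for each entry of `T`. The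
edge of `T k` has a colour and two end vertices, and `T k = src k * h * (tgt k)⁻¹` for some `h` in
the subgroup of that colour, the label of the edge. In the language of graphs of groups, this is a
finite connected graph in which each `T k` is the loop at `1` passing once through its own edge. -/
structure Carrier (H : ι → Subgroup G) (T : Fin n → G) where
  verts : Finset G
  reach : ∀ v ∈ verts, Reach H verts v
  color : Fin n → ι
  src : Fin n → G
  tgt : Fin n → G
  src_mem : ∀ k, src k ∈ verts
  tgt_mem : ∀ k, tgt k ∈ verts
  label_mem : ∀ k, (src k)⁻¹ * T k * tgt k ∈ H (color k)

namespace Carrier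

variable {H : ι → Subgroup G} {T : Fin n → G}

theorem nonempty [Nonempty ι] (hH : ⨆ i, H i = ⊤) (T : Fin n → G) : Nonempty (Carrier H T) := by
  classical
  choose F hF using Reach.exists_finset hH
  let U : Finset G := insert 1 (Finset.univ.biUnion fun k => F (T k))
  let V : Finset G := {v ∈ U | Reach H U v}
  have hV {v : G} (hv : Reach H U v) : v ∈ V := Finset.mem_filter.2 ⟨hv.mem, hv⟩
  have hFU (k : Fin n) : F (T k) ⊆ U :=
    (Finset.subset_biUnion_of_mem (fun k => F (T k)) (Finset.mem_univ k)).trans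
      (Finset.subset_insert _ _)
  exact ⟨{
    verts := V
    reach := fun v hv => (Finset.mem_filter.1 hv).2.within_reachable.mono fun _ => hV
    color := fun _ => Classical.arbitrary ι
    src := T
    tgt := 1
    src_mem := fun k => hV ((hF (T k)).mono (hFU k))
    tgt_mem := fun _ => hV (.one (Finset.mem_insert_self _ _))
    label_mem := by simp }⟩

/-- The element of `H (D.color k)` that labels the edge of `T k`. -/
def label (D : Carrier H T) (k : Fin n) : G := (D.src k)⁻¹ * T k * D.tgt k

/-- A carrier has the least possible number of vertices among all carriers of tuples that are
Nielsen equivalent to the given one. -/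
def IsMinimal (D : Carrier H T) : Prop :=
  ∀ ⦃T' : Fin n → G⦄, NielsenEquiv T T' → ∀ D' : Carrier H T', D.verts.card ≤ D'.verts.card

theorem exists_isMinimal [Nonempty ι] (hH : ⨆ i, H i = ⊤) (T : Fin n → G) :
    ∃ (T' : Fin n → G) (D : Carrier H T'), NielsenEquiv T T' ∧ D.IsMinimal := by
  have hne : ∃ c, ∃ (T' : Fin n → G) (D : Carrier H T'), NielsenEquiv T T' ∧ D.verts.card = c :=
    let ⟨D⟩ := nonempty hH T
    ⟨_, T, D, .refl T, rfl⟩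
  classical
  obtain ⟨T', D, hT', hD⟩ := Nat.find_spec hne
  exact ⟨T', D, hT', fun T'' hT'' D'' =>
    hD.trans_le (Nat.find_min' hne ⟨T'', D'', hT'.trans hT'', rfl⟩)⟩

theorem exists_slide (D : Carrier H T) {A : Set G} {h : G}
    (hA : ∀ v ∈ D.verts, Reach H (slide A h '' D.verts) (slide A h v))
    {S : Set (Fin n)} (hS : h ∈ Subgroup.closure (T '' S)) {i : ι} {x y : G}
    (hx : x ∈ slide A h '' D.verts) (hy : y ∈ slide A h '' D.verts)
    (hxy : ∀ k ∈ S, x⁻¹ * T k * y ∈ H i) :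
    ∃ (T' : Fin n → G) (D' : Carrier H T'), NielsenEquiv T T' ∧
      (D'.verts : Set G) = slide A h '' D.verts ∧
      (∀ k ∈ S, D'.color k = i ∧ D'.src k = x ∧ D'.tgt k = y) ∧
      ∀ k ∉ S, D'.color k = D.color k ∧ D'.src k = slide A h (D.src k) ∧
        D'.tgt k = slide A h (D.tgt k) ∧ D'.label k = D.label k := by
  classical
  let T' (k : Fin n) : G :=
    if k ∈ S then T k else shift A h (D.src k) * T k * (shift A h (D.tgt k))⁻¹
  have hT' : NielsenEquiv T T' :=
    .of_forall_mul (S := S) (fun k hk => if_pos hk) (fun k => shift_mem hS (D.src k))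
      (fun k => inv_mem (shift_mem hS (D.tgt k))) fun k hk => if_neg hk
  have hlabel {k} (hk : k ∉ S) :
      (slide A h (D.src k))⁻¹ * T' k * slide A h (D.tgt k) = D.label k := by
    simp only [T', if_neg hk, slide, label]
    group
  have hmem {v} (hv : v ∈ D.verts) : slide A h v ∈ D.verts.image (slide A h) :=
    Finset.mem_image_of_mem _ hv
  refine ⟨T', {
    verts := D.verts.image (slide A h)
    reach := fun v hv => ?_
    color := fun k => if k ∈ S then i else D.color k
    src := fun k => if k ∈ S then x else slide A h (D.src k)
    tgt := fun k => if k ∈ S then y else slide A h (D.tgt k)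
    src_mem := fun k => ?_
    tgt_mem := fun k => ?_
    label_mem := fun k => ?_ }, hT', Finset.coe_image, fun k hk => ?_, fun k hk => ?_⟩
  · obtain ⟨w, hw, rfl⟩ := Finset.mem_image.1 hv
    simpa only [Finset.coe_image] using hA w hw
  · split_ifs
    exacts [by exact_mod_cast hx, hmem (D.src_mem k)]
  · split_ifs
    exacts [by exact_mod_cast hy, hmem (D.tgt_mem k)]
  · split_ifs with hk
    · simpa only [T', if_pos hk] using hxy k hk
    · exact (congrArg (· ∈ H (D.color k)) (hlabel hk)).mpr (D.label_mem k)
  · simp only [if_pos hk, true_and]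
  · simpa only [if_neg hk, true_and, label] using hlabel hk

/-- The walks of colour `i` in a carrier and their labels: such a walk may jump between vertices in
the same left coset of `H i`, with label `v⁻¹ * w`, and traverse edges of colour `i` either way. -/
inductive Path (D : Carrier H T) (i : ι) : G → G → G → Prop
  | vert {v w : G} : v ∈ D.verts → w ∈ D.verts → v⁻¹ * w ∈ H i → Path D i v w (v⁻¹ * w)
  | edge (k : Fin n) : D.color k = i → Path D i (D.src k) (D.tgt k) (D.label k)
  | symm {v w g : G} : Path D i v w g → Path D i w v g⁻¹
  | trans {u v w g h : G} : Path D i u v g → Path D i v w h → Path D i u w (g * h)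

/-- A carrier is folded in colour `i` when a walk of that colour with trivial label never joins two
distinct vertices, so that `H i` acts partially on the vertices. -/
def IsFolded (D : Carrier H T) (i : ι) : Prop := ∀ ⦃v w⦄, D.Path i v w 1 → v = w

variable {D : Carrier H T} {i : ι}

theorem Path.refl {v : G} (hv : v ∈ D.verts) : D.Path i v v 1 := by
  simpa using vert (i := i) hv hv (by simp)

theorem Path.mono {T' : Fin n → G} {D' : Carrier H T'} {f : G → G}
    (hvert : ∀ v ∈ D.verts, ∀ w ∈ D.verts, v⁻¹ * w ∈ H i → D'.Path i (f v) (f w) (v⁻¹ * w))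
    (hedge : ∀ k, D.color k = i → D'.Path i (f (D.src k)) (f (D.tgt k)) (D.label k))
    {v w g : G} (h : D.Path i v w g) : D'.Path i (f v) (f w) g := by
  induction h with
  | vert hv hw hvw => exact hvert _ hv _ hw hvw
  | edge k hk => exact hedge k hk
  | symm _ ih => exact ih.symm
  | trans _ _ ih ih' => exact ih.trans ih'

theorem src_mul_label_mul_tgt_inv (D : Carrier H T) (k : Fin n) :
    D.src k * D.label k * (D.tgt k)⁻¹ = T k := by
  rw [label]
  group

theorem card_lt_of_coe_eq_image {T' : Fin n → G} {D' : Carrier H T'} {f : G → G}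
    (hf : (D'.verts : Set G) = f '' D.verts) {v w : G} (hv : v ∈ D.verts) (hw : w ∈ D.verts)
    (hvw : v ≠ w) (hfvw : f v = f w) : D'.verts.card < D.verts.card := by
  classical
  have hf' : D'.verts = D.verts.image f := by exact_mod_cast hf
  rw [hf']
  refine Finset.card_image_le.lt_of_ne fun hcard => hvw ?_
  exact Finset.card_image_iff.1 hcard hv hw hfvw

theorem IsMinimal.eq_of_mul_inv_mem (hD : D.IsMinimal) {v w : G} (hv : Reach H (↑D.verts \ {w}) v)
    (hw : w ∈ D.verts)
    (hloop : ∀ k, D.color k = i → (D.src k : G ⧸ H i) = D.tgt k)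
    (hvw : v * w⁻¹ ∈ Subgroup.closure
      (T '' {k | D.color k = i ∧ (D.src k : G ⧸ H i) = v})) : v = w := by
  by_contra hne
  set A := {a | Reach H (↑D.verts \ {w}) a}
  set h := v * w⁻¹
  have hvD : v ∈ D.verts := hv.mem.1
  have hwA : w ∉ A := fun hw => hw.mem.2 rfl
  have hslide_v : slide A h v = v := slide_of_mem hv
  have hslide_w : slide A h w = v := by
    rw [slide_of_notMem hwA, inv_mul_cancel_right]
  have hmove : ∀ q ∈ D.verts, q ∈ ({w} : Set G) → ∃ a, Reach H (↑D.verts \ {w}) a ∧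
      ∃ i, a⁻¹ * (h * q) ∈ H i := by
    rintro q - rfl
    exact ⟨v, hv, i, by simp [h]⟩
  have hvmem : v ∈ slide A h '' D.verts := ⟨v, hvD, hslide_v⟩
  have hcolor : ∀ k ∈ {k | D.color k = i ∧ (D.src k : G ⧸ H i) = v}, v⁻¹ * T k * v ∈ H i := by
    rintro k ⟨rfl, hk⟩
    have hsrc := QuotientGroup.eq.1 hk.symm
    have htgt := QuotientGroup.eq.1 (hk.symm.trans (hloop k rfl))
    rw [← D.src_mul_label_mul_tgt_inv k]
    convert mul_mem (mul_mem hsrc (D.label_mem k)) (inv_mem htgt) using 1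
    simp only [label]
    group
  obtain ⟨T', D', hT', hverts, -⟩ :=
    D.exists_slide (fun u hu => (D.reach u hu).slide_image hmove) hvw hvmem hvmem hcolor
  exact (hD hT' D').not_gt
    (card_lt_of_coe_eq_image hverts hvD hw hne (hslide_v.trans hslide_w.symm))

theorem Path.mul_inv_mem_closure (hloop : ∀ k, D.color k = i → (D.src k : G ⧸ H i) = D.tgt k)
    {v w g : G} (h : D.Path i v w g) :
    (v : G ⧸ H i) = w ∧ v * g * w⁻¹ ∈ Subgroup.closure
      (T '' {k | D.color k = i ∧ (D.src k : G ⧸ H i) = v}) := by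
  induction h with
  | vert _ _ hvw => exact ⟨QuotientGroup.eq.2 hvw, by simp⟩
  | edge k hk =>
    rw [D.src_mul_label_mul_tgt_inv k]
    exact ⟨hloop k hk, Subgroup.subset_closure ⟨k, ⟨hk, rfl⟩, rfl⟩⟩
  | symm _ ih =>
    refine ⟨ih.1.symm, ?_⟩
    simpa only [ih.1, mul_inv_rev, inv_inv, mul_assoc] using inv_mem ih.2
  | trans _ _ ih ih' =>
    refine ⟨ih.1.trans ih'.1, ?_⟩
    rw [← ih.1] at ih'
    simpa only [mul_assoc, inv_mul_cancel_left] using mul_mem ih.2 ih'.2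

theorem Path.mem {v w g : G} (h : D.Path i v w g) : v ∈ D.verts ∧ w ∈ D.verts := by
  induction h with
  | vert hv hw => exact ⟨hv, hw⟩
  | edge k => exact ⟨D.src_mem k, D.tgt_mem k⟩
  | symm _ ih => exact ih.symm
  | trans _ _ ih ih' => exact ⟨ih.1, ih'.2⟩

theorem IsMinimal.isFolded_of_forall_loop (hD : D.IsMinimal)
    (hloop : ∀ k, D.color k = i → (D.src k : G ⧸ H i) = D.tgt k) : D.IsFolded i := by
  intro v w h
  by_contra hne
  have hdisj : Disjoint ({v} : Set G) {w} := Set.disjoint_singleton.2 hne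
  obtain ⟨hcoset, hvw⟩ := h.mul_inv_mem_closure hloop
  rw [mul_one] at hvw
  rcases (D.reach v h.mem.1).exists_avoiding hdisj (.inl rfl) with ⟨_, rfl, hv⟩ | ⟨_, rfl, hw⟩
  · exact hne (hD.eq_of_mul_inv_mem hv h.mem.2 hloop hvw)
  · refine hne (hD.eq_of_mul_inv_mem hw h.mem.1 hloop ?_).symm
    simpa only [hcoset, mul_inv_rev, inv_inv] using inv_mem hvw

/-- The carrier `D'` arises from `D` by a map `f` of vertices that keeps the walks whose colour is
that of the edge `j` together with their labels, and makes the two ends of `j` lie in one coset. -/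
structure IsMerge {T' : Fin n → G} (D : Carrier H T) (j : Fin n) (D' : Carrier H T')
    (f : G → G) : Prop where
  nielsenEquiv : NielsenEquiv T T'
  coe_verts : (D'.verts : Set G) = f '' D.verts
  mk_eq_mk : ∀ v ∈ D.verts, ∀ w ∈ D.verts, (v : G ⧸ H (D.color j)) = w →
    (f v : G ⧸ H (D.color j)) = f w
  mk_src_eq_mk_tgt : (f (D.src j) : G ⧸ H (D.color j)) = f (D.tgt j)
  path : ∀ {v w g}, D.Path (D.color j) v w g → D'.Path (D.color j) (f v) (f w) g

theorem exists_collapse (D : Carrier H T) {j : Fin n} {A : Set G} {h : G}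
    (hA : ∀ v ∈ D.verts, Reach H (slide A h '' D.verts) (slide A h v))
    (hcoset : ∀ v ∈ D.verts, ∀ w ∈ D.verts, (v : G ⧸ H (D.color j)) = w → (v ∈ A ↔ w ∈ A))
    (hj : T j = (shift A h (D.src j))⁻¹ * shift A h (D.tgt j))
    (hh : h ∈ Subgroup.closure {T j}) {i : ι} {x y : G}
    (hx : x ∈ slide A h '' D.verts) (hy : y ∈ slide A h '' D.verts) (hxy : x⁻¹ * T j * y ∈ H i) :
    ∃ (T' : Fin n → G) (D' : Carrier H T') (f : G → G), D.IsMerge j D' f := by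
  obtain ⟨T', D', hT', hverts, -, hD'⟩ := D.exists_slide (S := {j}) hA
    (by rwa [Set.image_singleton]) hx hy (by rintro _ rfl; exact hxy)
  have hlabel : (slide A h (D.src j))⁻¹ * slide A h (D.tgt j) = D.label j := by
    rw [label, hj, slide, slide]
    group
  have hvert {v w} (hv : v ∈ D.verts) (hw : w ∈ D.verts) {g : G}
      (hvw : (slide A h v)⁻¹ * slide A h w = g) (hg : g ∈ H (D.color j)) :
      D'.Path (D.color j) (slide A h v) (slide A h w) g := by
    subst hvw
    have hmem {u} (hu : u ∈ D.verts) : slide A h u ∈ D'.verts :=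
      Finset.mem_coe.1 (hverts ▸ Set.mem_image_of_mem _ hu)
    exact .vert (hmem hv) (hmem hw) hg
  refine ⟨T', D', slide A h, hT', hverts, fun v hv w hw hvw => ?_, ?_, Path.mono ?_ ?_⟩
  · rw [QuotientGroup.eq, slide_inv_mul_slide (hcoset v hv w hw hvw)]
    exact QuotientGroup.eq.1 hvw
  · rw [QuotientGroup.eq, hlabel]
    exact D.label_mem j
  · exact fun v hv w hw hvw =>
      hvert hv hw (slide_inv_mul_slide (hcoset v hv w hw (QuotientGroup.eq.2 hvw))) hvw
  · intro k hk
    rcases eq_or_ne k j with rfl | hkj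
    · exact hvert (D.src_mem k) (D.tgt_mem k) hlabel (D.label_mem k)
    · obtain ⟨hcolor, hsrc, htgt, hlabel⟩ := hD' k hkj
      rw [← hsrc, ← htgt, ← hlabel]
      exact .edge k (hcolor.trans hk)

-- Translating by `h` everything that the coset of `v` cuts off from `1` makes the ends of `j` lie
-- in one coset, so that the edge `j` is no longer needed where it is; it is then attached across a
-- step from `p` to `q` that the translation has torn apart.
theorem exists_merge_of_reach (D : Carrier H T) {j : Fin n} {u v h : G}
    (huv : D.src j = u ∧ D.tgt j = v ∧ T j = h ∨ D.src j = v ∧ D.tgt j = u ∧ T j = h⁻¹)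
    (hu : Reach H (↑D.verts \ {g | (g : G ⧸ H (D.color j)) = v}) u) :
    ∃ (T' : Fin n → G) (D' : Carrier H T') (f : G → G), D.IsMerge j D' f := by
  set Q : Set G := {g | (g : G ⧸ H (D.color j)) = v}
  set A : Set G := {a | Reach H (↑D.verts \ Q) a}
  have huA : u ∈ A := hu
  have hvA : v ∉ A := fun hv => hv.mem.2 rfl
  obtain ⟨hv, hlabel, hj, hh⟩ : v ∈ D.verts ∧ u⁻¹ * h * v ∈ H (D.color j) ∧
      T j = (shift A h (D.src j))⁻¹ * shift A h (D.tgt j) ∧ h ∈ Subgroup.closure {T j} := by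
    rcases huv with ⟨rfl, rfl, rfl⟩ | ⟨rfl, rfl, hT⟩
    · exact ⟨D.tgt_mem j, D.label_mem j, by simp [shift_of_mem huA, shift_of_notMem hvA],
        Subgroup.subset_closure rfl⟩
    · refine ⟨D.src_mem j, ?_, by simp [shift_of_mem huA, shift_of_notMem hvA, hT], ?_⟩
      · simpa [hT, mul_assoc] using inv_mem (D.label_mem j)
      · exact inv_mem_iff.1 (hT ▸ Subgroup.subset_closure rfl)
  have hmove : ∀ q ∈ D.verts, q ∈ Q → ∃ a, Reach H (↑D.verts \ Q) a ∧ ∃ i, a⁻¹ * (h * q) ∈ H i :=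
    fun q _ hqQ => ⟨u, hu, D.color j, by
      simpa only [mul_assoc, mul_inv_cancel_left] using
        mul_mem hlabel (QuotientGroup.eq.1 hqQ.symm)⟩
  obtain ⟨p, q, i, hp, hq, hqA, hpq⟩ := (D.reach v hv).exists_crossing hu.one_mem hvA
  have hp' : p ∈ slide A h '' D.verts := ⟨p, hp.mem.1, slide_of_mem hp⟩
  have hq' : h * q ∈ slide A h '' D.verts := ⟨q, hq, slide_of_notMem hqA⟩
  obtain ⟨x, y, hx, hy, hxy⟩ : ∃ x y, x ∈ slide A h '' D.verts ∧ y ∈ slide A h '' D.verts ∧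
      x⁻¹ * T j * y ∈ H i := by
    rcases huv with ⟨-, -, hT⟩ | ⟨-, -, hT⟩
    · exact ⟨h * q, p, hq', hp', by simpa [hT, mul_assoc] using inv_mem hpq⟩
    · exact ⟨p, h * q, hp', hq', by simpa [hT, mul_assoc] using hpq⟩
  exact D.exists_collapse (fun w hw => (D.reach w hw).slide_image hmove)
    (fun v hv w hw hvw => Reach.iff_of_mk_eq hv hw hvw) hj hh hx hy hxy

theorem exists_merge (D : Carrier H T) {j : Fin n}
    (hj : (D.src j : G ⧸ H (D.color j)) ≠ D.tgt j) :
    ∃ (T' : Fin n → G) (D' : Carrier H T') (f : G → G), D.IsMerge j D' f := by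
  let coset (c : G ⧸ H (D.color j)) : Set G := {g | (g : G ⧸ H (D.color j)) = c}
  have hdisj : Disjoint (coset (D.src j)) (coset (D.tgt j)) :=
    Set.disjoint_left.2 fun g hs ht => hj (hs.symm.trans ht)
  rcases (D.reach _ (D.src_mem j)).exists_avoiding hdisj (.inl rfl) with ⟨p, hp, h⟩ | ⟨p, hp, h⟩
  · exact D.exists_merge_of_reach (.inl ⟨rfl, rfl, rfl⟩)
      ((Reach.iff_of_mk_eq h.mem.1 (D.src_mem j) hp).1 h)
  · exact D.exists_merge_of_reach (.inr ⟨rfl, rfl, (inv_inv _).symm⟩)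
      ((Reach.iff_of_mk_eq h.mem.1 (D.tgt_mem j) hp).1 h)

open scoped Classical in
/-- The number of left cosets of `H i` met by the vertices of a carrier. -/
noncomputable def cosetCount (D : Carrier H T) (i : ι) : ℕ :=
  (D.verts.image ((↑) : G → G ⧸ H i)).card

theorem IsMerge.cosetCount_lt {T' : Fin n → G} {D' : Carrier H T'} {j : Fin n} {f : G → G}
    (hf : D.IsMerge j D' f) (hj : (D.src j : G ⧸ H (D.color j)) ≠ D.tgt j) :
    D'.cosetCount (D.color j) < D.cosetCount (D.color j) := by
  classical
  have hverts : D'.verts = D.verts.image f := by exact_mod_cast hf.coe_verts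
  rw [cosetCount, hverts, Finset.image_image]
  exact card_image_lt_card_image hf.mk_eq_mk (D.src_mem j) (D.tgt_mem j) hj hf.mk_src_eq_mk_tgt

theorem IsMerge.isFolded {T' : Fin n → G} {D' : Carrier H T'} {j : Fin n} {f : G → G}
    (hf : D.IsMerge j D' f) (hD : D.IsMinimal) (hD' : D'.IsFolded (D.color j)) :
    D.IsFolded (D.color j) := by
  intro v w h
  by_contra hvw
  exact (hD hf.nielsenEquiv D').not_gt
    (card_lt_of_coe_eq_image hf.coe_verts h.mem.1 h.mem.2 hvw (hD' (hf.path h)))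

theorem IsMerge.isMinimal {T' : Fin n → G} {D' : Carrier H T'} {j : Fin n} {f : G → G}
    (hf : D.IsMerge j D' f) (hD : D.IsMinimal) : D'.IsMinimal := by
  classical
  have hcard : D'.verts.card ≤ D.verts.card := by
    rw [show D'.verts = D.verts.image f by exact_mod_cast hf.coe_verts]
    exact Finset.card_image_le
  exact fun T'' hT'' D'' => hcard.trans (hD (hf.nielsenEquiv.trans hT'') D'')

theorem IsMinimal.isFolded (hD : D.IsMinimal) (i : ι) : D.IsFolded i := by
  induction hc : D.cosetCount i using Nat.strong_induction_on generalizing T with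
  | _ c ih =>
    subst hc
    by_cases hloop : ∀ k, D.color k = i → (D.src k : G ⧸ H i) = D.tgt k
    · exact hD.isFolded_of_forall_loop hloop
    · push Not at hloop
      obtain ⟨j, rfl, hj⟩ := hloop
      obtain ⟨T', D', f, hf⟩ := D.exists_merge hj
      exact hf.isFolded hD (ih _ (hf.cosetCount_lt hj) (hf.isMinimal hD) rfl)

end Carrier

end Carrier

section Realization

universe u v w x

open Monoid.CoprodI (of)

-- A partial action of `M` on `V` extends to the induced action on a quotient of `M × V`, and
-- `eq_of_one` says exactly that `V` embeds into that quotient.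
theorem exists_perm_hom_of_labels {V : Type u} {M : Type v} [Group M] {L : V → V → M → Prop}
    (refl : ∀ v, L v v 1) (symm : ∀ {v w a}, L v w a → L w v a⁻¹)
    (trans : ∀ {u v w a b}, L u v a → L v w b → L u w (a * b))
    (eq_of_one : ∀ {v w}, L v w 1 → v = w) :
    ∃ (Ω : Type (max u v)) (σ : M →* Equiv.Perm Ω) (f : V ↪ Ω),
      ∀ v w a, L v w a → σ a (f w) = f v := by
  let s : Setoid (M × V) :=
    { r := fun x y => L x.2 y.2 (x.1⁻¹ * y.1)
      iseqv :=
        { refl := fun x => by simpa using refl x.2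
          symm := fun h => by simpa using symm h
          trans := fun h h' => by simpa [mul_assoc] using trans h h' } }
  let act : MulAction M (Quotient s) :=
    { smul := fun a => Quotient.map (fun x => (a * x.1, x.2)) fun x y (h : L _ _ _) =>
        show L _ _ _ by simpa [mul_assoc] using h
      one_smul := by
        rintro ⟨x⟩
        exact congrArg (Quotient.mk s) (Prod.ext (one_mul x.1) rfl)
      mul_smul := by
        rintro a b ⟨x⟩
        exact congrArg (Quotient.mk s) (Prod.ext (mul_assoc a b x.1) rfl) }
  refine ⟨Quotient s, MulAction.toPermHom M (Quotient s), ⟨fun v => Quotient.mk s (1, v), ?_⟩, ?_⟩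
  · intro v w hvw
    have h : L v w (1⁻¹ * 1) := Quotient.exact hvw
    exact eq_of_one (by simpa using h)
  · intro v w a h
    refine (Quotient.sound (?_ : L v w (1⁻¹ * (a * 1)))).symm
    simpa using h

theorem exists_amalgam {ι : Type u} {V : Type v} {Ω : ι → Type w} (f : ∀ i, V ↪ Ω i) :
    ∃ (W : Type (max u v w)) (e : ∀ i, Ω i ↪ W) (g : V ↪ W), ∀ i v, e i (f i v) = g v := by
  let e (i : ι) : Ω i → V ⊕ Σ i, Ω i := extend (f i) Sum.inl fun ω => Sum.inr ⟨i, ω⟩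
  have he (i : ι) (v : V) : e i (f i v) = Sum.inl v := (f i).injective.extend_apply _ _ v
  have he' (i : ι) {ω : Ω i} (hω : ¬ ∃ v, f i v = ω) : e i ω = Sum.inr ⟨i, ω⟩ :=
    extend_apply' _ _ _ hω
  have hinj (i : ι) : Injective (e i) := by
    intro x y hxy
    by_cases hx : ∃ v, f i v = x <;> by_cases hy : ∃ v, f i v = y
    · obtain ⟨v, rfl⟩ := hx
      obtain ⟨w, rfl⟩ := hy
      simpa [he] using hxy
    · obtain ⟨v, rfl⟩ := hx
      simp [he, he' i hy] at hxy
    · obtain ⟨w, rfl⟩ := hy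
      simp [he, he' i hx] at hxy
    · simpa [he' i hx, he' i hy] using hxy
  exact ⟨V ⊕ Σ i, Ω i, fun i => ⟨e i, hinj i⟩, ⟨Sum.inl, Sum.inl_injective⟩, he⟩

theorem exists_coprodI_perm_hom {ι : Type u} {V : Type v} {M : ι → Type w} {Ω : ι → Type x}
    [∀ i, Group (M i)] (σ : ∀ i, M i →* Equiv.Perm (Ω i)) (f : ∀ i, V ↪ Ω i) :
    ∃ (W : Type (max u v x)) (ρ : Monoid.CoprodI M →* Equiv.Perm W) (g : V ↪ W),
      ∀ i v w m, σ i m (f i w) = f i v → ρ (of m) (g w) = g v := by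
  obtain ⟨W, e, g, heg⟩ := exists_amalgam f
  refine ⟨W, Monoid.CoprodI.lift fun i => (Equiv.Perm.viaEmbeddingHom (e i)).comp (σ i), g,
    fun i v w m h => ?_⟩
  rw [Monoid.CoprodI.lift_of, MonoidHom.comp_apply, Equiv.Perm.viaEmbeddingHom_apply, ← heg i,
    Equiv.Perm.viaEmbedding_apply, h, heg]

variable {ι : Type u} {M : ι → Type v} [∀ i, Group (M i)] {n : ℕ}
  {T : Fin n → Monoid.CoprodI M}

theorem Carrier.exists_perm_hom (D : Carrier (fun i => (of : M i →* _).range) T)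
    (hD : ∀ i, D.IsFolded i) :
    ∃ (W : Type (max u v)) (ρ : Monoid.CoprodI M →* Equiv.Perm W) (g : D.verts ↪ W),
      ∀ i (v w : D.verts) (m : M i), D.Path i v w (of m) → ρ (of m) (g w) = g v := by
  have hrep (i : ι) := exists_perm_hom_of_labels (V := D.verts)
    (L := fun v w m => D.Path i v w (of (i := i) m))
    (fun v => by simpa using Path.refl v.2) (fun h => by simpa using h.symm)
    (fun h h' => by simpa using h.trans h')
    fun h => Subtype.ext (hD i (by simpa using h))
  choose Ω σ f hf using hrep
  obtain ⟨W, ρ, g, hg⟩ := exists_coprodI_perm_hom σ f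
  exact ⟨W, ρ, g, fun i v w m h => hg i v w m (hf i v w m h)⟩

theorem Carrier.eq_one_of_isFolded (D : Carrier (fun i => (of : M i →* _).range) T)
    (hD : ∀ i, D.IsFolded i) (hT : Subgroup.closure (Set.range T) = ⊤) {v : Monoid.CoprodI M}
    (hv : v ∈ D.verts) : v = 1 := by
  obtain ⟨W, ρ, g, hg⟩ := D.exists_perm_hom hD
  have hpath {i v w x} (h : D.Path i v w x) (hx : x ∈ (of : M i →* _).range) :
      ρ x (g ⟨w, h.mem.2⟩) = g ⟨v, h.mem.1⟩ := by
    obtain ⟨m, rfl⟩ := hx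
    exact hg i _ _ m h
  have h1 : 1 ∈ D.verts := (D.reach v hv).one_mem
  have hreach {c} (h : Reach (fun i => (of : M i →* _).range) D.verts c) :
      ρ c (g ⟨c, h.mem⟩) = g ⟨1, h1⟩ := by
    induction h with
    | one => simp
    | @step i b c hb hbc hc ih =>
      calc ρ c (g ⟨c, hc⟩) = ρ b (ρ (b⁻¹ * c) (g ⟨c, hc⟩)) := by
            rw [← Equiv.Perm.mul_apply, ← map_mul, mul_inv_cancel_left]
        _ = ρ b (g ⟨b, hb.mem⟩) := by rw [hpath (.vert hb.mem hc hbc) hbc]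
        _ = g ⟨1, h1⟩ := ih
  have hgen (k : Fin n) : T k ∈ (MulAction.stabilizer (Equiv.Perm W) (g ⟨1, h1⟩)).comap ρ := by
    change ρ (T k) (g ⟨1, h1⟩) = g ⟨1, h1⟩
    rw [← D.src_mul_label_mul_tgt_inv k, map_mul, map_mul, map_inv, Equiv.Perm.mul_apply,
      Equiv.Perm.mul_apply, Equiv.Perm.inv_eq_iff_eq.2 (hreach (D.reach _ (D.tgt_mem k))).symm,
      hpath (.edge k rfl) (D.label_mem k), hreach (D.reach _ (D.src_mem k))]
  have hfix (x : Monoid.CoprodI M) : ρ x (g ⟨1, h1⟩) = g ⟨1, h1⟩ :=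
    (Subgroup.closure_le _).2 (Set.range_subset_iff.2 hgen) (hT ▸ Subgroup.mem_top x)
  have hgv : g ⟨v, hv⟩ = g ⟨1, h1⟩ :=
    (ρ v).injective ((hreach (D.reach v hv)).trans (hfix v).symm)
  exact congrArg Subtype.val (g.injective hgv)

theorem iSup_range_of : ⨆ i, (of : M i →* Monoid.CoprodI M).range = ⊤ := by
  rw [← Monoid.CoprodI.range_eq_iSup, Monoid.CoprodI.lift_of', MonoidHom.range_eq_top]
  exact surjective_id

theorem exists_nielsenEquiv_forall_mem_range_of [Nonempty ι]
    (hT : Subgroup.closure (Set.range T) = ⊤) :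
    ∃ T' : Fin n → Monoid.CoprodI M, NielsenEquiv T T' ∧
      ∀ k, ∃ i, T' k ∈ (of : M i →* Monoid.CoprodI M).range := by
  obtain ⟨T', D, hT', hD⟩ := Carrier.exists_isMinimal (iSup_range_of (M := M)) T
  have hone {v} (hv : v ∈ D.verts) : v = 1 :=
    D.eq_one_of_isFolded hD.isFolded (hT'.closure_eq.trans hT) hv
  refine ⟨T', hT', fun k => ⟨D.color k, ?_⟩⟩
  simpa [hone (D.src_mem k), hone (D.tgt_mem k)] using D.label_mem k

end Realization

section Euclid

variable {G K : Type*} [Group G] {n : ℕ} {T : Fin n → G}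

theorem exists_nielsenEquiv_pow (s : K → G) (hT : ∀ j, ∃ k, T j ∈ Subgroup.zpowers (s k)) :
    ∃ (c : Fin n → K) (e : Fin n → ℕ), NielsenEquiv T fun j => s (c j) ^ e j := by
  choose c z hz using hT
  refine ⟨c, fun j => (z j).natAbs, .of_eq_or_eq_inv fun j => ?_⟩
  rw [← hz]
  rcases Int.natAbs_eq (z j) with h | h
  · left
    dsimp only
    rw [h, zpow_natCast, Int.natAbs_natCast]
  · right
    dsimp only
    rw [h, zpow_neg, zpow_natCast, inv_inv, Int.natAbs_neg, Int.natAbs_natCast]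

theorem exists_nielsenEquiv_pow_pairwise_eq_zero_or_eq_zero (s : K → G) (c : Fin n → K)
    (e : Fin n → ℕ) :
    ∃ d : Fin n → ℕ, NielsenEquiv (fun j => s (c j) ^ e j) (fun j => s (c j) ^ d j) ∧
      ∀ i j, i ≠ j → c i = c j → d i = 0 ∨ d j = 0 := by
  -- Euclid's algorithm: a tuple of exponents with the least sum admits no subtraction step.
  obtain ⟨d, hd, hmin⟩ := WellFounded.has_min (measure fun d : Fin n → ℕ => ∑ j, d j).wf
    {d | NielsenEquiv (fun j => s (c j) ^ e j) (fun j => s (c j) ^ d j)} ⟨e, .refl _⟩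
  have hlt : ∀ i j, i ≠ j → c i = c j → d j ≠ 0 → d i < d j := by
    intro i j hij hc hj
    by_contra! hle
    have hsub : NielsenEquiv (fun j => s (c j) ^ d j)
        (fun k => s (c k) ^ update d i (d i - d j) k) := by
      convert NielsenEquiv.update_mul_inv (fun j => s (c j) ^ d j) hij using 1
      funext k
      rcases eq_or_ne k i with rfl | hk
      · rw [update_self, update_self, ← hc, pow_sub _ hle]
      · rw [update_of_ne hk, update_of_ne hk]
    have hsum : ∑ k, update d i (d i - d j) k < ∑ k, d k := by
      refine Finset.sum_lt_sum (fun k _ => ?_) ⟨i, Finset.mem_univ i, ?_⟩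
      · rcases eq_or_ne k i with rfl | hk
        · simp
        · rw [update_of_ne hk]
      · rw [update_self]
        omega
    exact hmin _ (hd.trans hsub) hsum
  refine ⟨d, hd, fun i j hij hc => ?_⟩
  by_contra! h
  exact (hlt i j hij hc h.2).asymm (hlt j i hij.symm hc.symm h.1)

end Euclid

section Cyclic

open Monoid.CoprodI (of)

variable {K : Type*}

/-- The cyclic group of order `q k`, in multiplicative notation; it is infinite cyclic when
`q k = 0`, so free factors of rank one are covered as well. -/
abbrev CyclicFactor (q : K → ℕ) (k : K) : Type :=
  Multiplicative (ZMod (q k))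

/-- The standard generator of the `k`-th factor of a free product of cyclic groups. -/
def cyclicGen (q : K → ℕ) (k : K) : Monoid.CoprodI (CyclicFactor q) :=
  of (M := CyclicFactor q) (i := k) (Multiplicative.ofAdd 1)

variable {q : K → ℕ}

theorem zpowers_ofAdd_one (d : ℕ) :
    Subgroup.zpowers (Multiplicative.ofAdd (1 : ZMod d)) = ⊤ := by
  refine eq_top_iff.2 fun a _ => ?_
  obtain ⟨z, hz⟩ := ZMod.intCast_surjective a.toAdd
  refine Subgroup.mem_zpowers_iff.2 ⟨z, ?_⟩
  rw [← ofAdd_zsmul, zsmul_one, hz, ofAdd_toAdd]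

theorem range_of_eq_zpowers_cyclicGen (k : K) :
    (of : CyclicFactor q k →* Monoid.CoprodI (CyclicFactor q)).range =
      Subgroup.zpowers (cyclicGen q k) := by
  rw [MonoidHom.range_eq_map, ← zpowers_ofAdd_one, MonoidHom.map_zpowers, cyclicGen]

theorem closure_range_cyclicGen : Subgroup.closure (Set.range (cyclicGen q)) = ⊤ := by
  simp_rw [← iSup_range_of, range_of_eq_zpowers_cyclicGen, Subgroup.zpowers_eq_closure,
    ← Subgroup.closure_iUnion, Set.iUnion_singleton_eq_range]

theorem ofAdd_one_pow (d : ℕ) : Multiplicative.ofAdd (1 : ZMod d) ^ d = 1 := by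
  rw [← ofAdd_nsmul, nsmul_one, ZMod.natCast_self, ofAdd_zero]

theorem cyclicGen_pow_eq_one (k : K) : cyclicGen q k ^ q k = 1 := by
  rw [cyclicGen, ← map_pow, ofAdd_one_pow, map_one]

theorem exists_zmod_hom {G : Type*} [Group G] {d : ℕ} {g : G} (hg : g ^ d = 1) :
    ∃ φ : Multiplicative (ZMod d) →* G, φ (Multiplicative.ofAdd 1) = g := by
  have hz : zmultiplesHom (Additive G) (Additive.ofMul g) d = 0 := by simp [← ofMul_pow, hg]
  refine ⟨(ZMod.lift d ⟨_, hz⟩).toMultiplicativeLeft, ?_⟩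
  simpa using congrArg Additive.toMul (ZMod.lift_coe d ⟨_, hz⟩ 1)

theorem exists_coprodI_cyclicFactor_hom {G : Type*} [Group G] {g : K → G}
    (hg : ∀ k, g k ^ q k = 1) :
    ∃ φ : Monoid.CoprodI (CyclicFactor q) →* G, ∀ k, φ (cyclicGen q k) = g k := by
  choose φ hφ using fun k => exists_zmod_hom (hg k)
  exact ⟨Monoid.CoprodI.lift φ, fun k => (Monoid.CoprodI.lift_of φ _).trans (hφ k)⟩

variable {n : ℕ} {T : Fin n → Monoid.CoprodI (CyclicFactor q)}

theorem coprime_of_closure_range_eq_top {c : Fin n → K} {e : Fin n → ℕ} {k : K} {d : ℕ}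
    (hgen : Subgroup.closure (Set.range fun j => cyclicGen q (c j) ^ e j) = ⊤)
    (hd : ∀ j, c j = k → e j = 0 ∨ e j = d) : d.Coprime (q k) := by
  classical
  let proj : Monoid.CoprodI (CyclicFactor q) →* CyclicFactor q k :=
    Monoid.CoprodI.lift (Pi.mulSingle k (MonoidHom.id _))
  have hproj : proj (cyclicGen q k) = Multiplicative.ofAdd 1 :=
    Monoid.CoprodI.of_leftInverse k _
  have hle : Subgroup.closure (Set.range fun j => cyclicGen q (c j) ^ e j) ≤
      (Subgroup.zpowers (Multiplicative.ofAdd (d : ZMod (q k)))).comap proj := by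
    rw [Subgroup.closure_le, Set.range_subset_iff]
    intro j
    rw [SetLike.mem_coe, Subgroup.mem_comap]
    by_cases hj : c j = k
    · rcases hd j hj with h | h <;> rw [h]
      · simp
      · rw [hj, map_pow, hproj, ← ofAdd_nsmul, nsmul_one]
        exact Subgroup.mem_zpowers _
    · simp [proj, cyclicGen, hj]
  have hone : proj (cyclicGen q k) ∈ Subgroup.zpowers (Multiplicative.ofAdd (d : ZMod (q k))) :=
    hle (hgen ▸ Subgroup.mem_top _)
  obtain ⟨z, hz⟩ := Subgroup.mem_zpowers_iff.1 (hproj ▸ hone)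
  rw [← ofAdd_zsmul, Multiplicative.ofAdd.apply_eq_iff_eq, zsmul_eq_mul] at hz
  exact (ZMod.isUnit_iff_coprime d (q k)).1 (.of_mul_eq_one_right _ hz)

theorem exists_nielsenEquiv_extend_cyclicGen_pow (hq : ∀ k, q k ≠ 1)
    (hT : Subgroup.closure (Set.range T) = ⊤) :
    ∃ (pos : K ↪ Fin n) (ν : K → ℕ), (∀ k, 0 < ν k ∧ (ν k).Coprime (q k)) ∧
      NielsenEquiv T (extend pos (fun k => cyclicGen q k ^ ν k) 1) := by
  rcases isEmpty_or_nonempty K with _ | _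
  · have : Subsingleton (Monoid.CoprodI (CyclicFactor q)) := by
      rw [← Subgroup.subsingleton_iff, ← subsingleton_iff_bot_eq_top, ← iSup_range_of,
        iSup_of_empty]
    exact ⟨.ofIsEmpty, 1, isEmptyElim, by rw [Subsingleton.elim T]⟩
  obtain ⟨T', hTT', hT'⟩ := exists_nielsenEquiv_forall_mem_range_of hT
  obtain ⟨c, e, he⟩ := exists_nielsenEquiv_pow (cyclicGen q) fun j =>
    (hT' j).imp fun k hk => range_of_eq_zpowers_cyclicGen k ▸ hk
  obtain ⟨d, hd, hzero⟩ :=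
    exists_nielsenEquiv_pow_pairwise_eq_zero_or_eq_zero (cyclicGen q) c e
  have hTd := (hTT'.trans he).trans hd
  have hgen := hTd.closure_eq.trans hT
  have hpos (k : K) : ∃ j, c j = k ∧ d j ≠ 0 := by
    by_contra! h
    refine hq k ((Nat.coprime_zero_left _).1 ?_)
    exact coprime_of_closure_range_eq_top hgen fun j hj => .inl (h j hj)
  choose pos hcpos hdpos using hpos
  have hinj : Injective pos := LeftInverse.injective hcpos
  have hpos_c {j : Fin n} (hj : d j ≠ 0) : pos (c j) = j := by
    by_contra hne
    exact (hzero _ _ hne (hcpos _)).elim (hdpos _) hj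
  refine ⟨⟨pos, hinj⟩, d ∘ pos, fun k => ⟨Nat.pos_of_ne_zero (hdpos k), ?_⟩, ?_⟩
  · refine coprime_of_closure_range_eq_top hgen fun j hj => or_iff_not_imp_left.2 fun h => ?_
    rw [comp_apply, ← hj, hpos_c h]
  · convert hTd using 1
    funext j
    by_cases hj : d j = 0
    · rw [extend_apply', hj, pow_zero, Pi.one_apply]
      rintro ⟨k, rfl⟩
      exact hdpos k hj
    · conv_lhs => rw [← hpos_c hj]
      rw [Embedding.coeFn_mk, hinj.extend_apply, comp_apply, hpos_c hj]

end Cyclic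

section Transfer

open Monoid.CoprodI (of)

variable {m r : ℕ} {p : Fin r → ℕ}

/-- The standard generators `x₁, …, x_m, s₁, …, s_r` of `F ∗ ℤ/p₁ℤ ∗ ⋯ ∗ ℤ/p_rℤ`. -/
def freeProductGen (m r : ℕ) (p : Fin r → ℕ) :
    Fin m ⊕ Fin r → Monoid.CoprodI (FPFactor m r p)
  | .inl i => of (show FPFactor m r p none from FreeGroup.of i)
  | .inr i => of (show FPFactor m r p (some i) from Multiplicative.ofAdd (1 : ZMod (p i)))

theorem closure_range_freeProductGen :
    Subgroup.closure (Set.range (freeProductGen m r p)) = ⊤ := by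
  rw [eq_top_iff, ← iSup_range_of, iSup_le_iff]
  rintro (_ | i)
  · let φ : FreeGroup (Fin m) →* _ := of (M := FPFactor m r p) (i := none)
    change φ.range ≤ _
    rw [MonoidHom.range_eq_map, ← FreeGroup.closure_range_of, MonoidHom.map_closure,
      ← Set.range_comp]
    exact Subgroup.closure_mono (Set.range_subset_iff.2 fun i => ⟨.inl i, rfl⟩)
  · let φ : Multiplicative (ZMod (p i)) →* _ := of (M := FPFactor m r p) (i := some i)
    change φ.range ≤ _
    rw [MonoidHom.range_eq_map, ← zpowers_ofAdd_one, MonoidHom.map_zpowers, Subgroup.zpowers_le]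
    exact Subgroup.subset_closure ⟨.inr i, rfl⟩

theorem freeProductGen_pow_eq_one (k : Fin m ⊕ Fin r) :
    freeProductGen m r p k ^ Sum.elim (0 : Fin m → ℕ) p k = 1 := by
  rcases k with i | i
  · exact pow_zero _
  · let φ : Multiplicative (ZMod (p i)) →* _ := of (M := FPFactor m r p) (i := some i)
    change φ (Multiplicative.ofAdd 1) ^ p i = 1
    rw [← map_pow, ofAdd_one_pow, map_one]

theorem exists_coprodI_FPFactor_hom {G : Type*} [Group G] {g : Fin m ⊕ Fin r → G}
    (hg : ∀ i, g (.inr i) ^ p i = 1) :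
    ∃ φ : Monoid.CoprodI (FPFactor m r p) →* G, ∀ k, φ (freeProductGen m r p k) = g k := by
  choose ψ hψ using fun i => exists_zmod_hom (hg i)
  let φ : ∀ o, FPFactor m r p o →* G
    | none => (FreeGroup.lift fun i => g (.inl i) : FreeGroup (Fin m) →* G)
    | some i => ψ i
  refine ⟨Monoid.CoprodI.lift φ, ?_⟩
  rintro (i | i)
  · exact (Monoid.CoprodI.lift_of φ _).trans FreeGroup.lift_apply_of
  · exact (Monoid.CoprodI.lift_of φ _).trans (hψ i)

theorem exists_mulEquiv_of_closure_range {G H K : Type*} [Group G] [Group H] {s : K → G}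
    {t : K → H} (hs : Subgroup.closure (Set.range s) = ⊤)
    (ht : Subgroup.closure (Set.range t) = ⊤) {φ : G →* H} {ψ : H →* G}
    (hφ : ∀ k, φ (s k) = t k) (hψ : ∀ k, ψ (t k) = s k) :
    ∃ Φ : G ≃* H, ∀ k, Φ (s k) = t k := by
  refine ⟨φ.toMulEquiv ψ ?_ ?_, hφ⟩
  · refine MonoidHom.eq_of_eqOn_dense hs (Set.eqOn_range.2 (funext fun k => ?_))
    simp [hφ, hψ]
  · refine MonoidHom.eq_of_eqOn_dense ht (Set.eqOn_range.2 (funext fun k => ?_))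
    simp [hφ, hψ]

theorem exists_mulEquiv_cyclicGen_eq_freeProductGen (m r : ℕ) (p : Fin r → ℕ) :
    ∃ Φ : Monoid.CoprodI (CyclicFactor (Sum.elim (0 : Fin m → ℕ) p)) ≃*
        Monoid.CoprodI (FPFactor m r p),
      ∀ k, Φ (cyclicGen _ k) = freeProductGen m r p k := by
  obtain ⟨φ, hφ⟩ := exists_coprodI_cyclicFactor_hom (freeProductGen_pow_eq_one (p := p))
  obtain ⟨ψ, hψ⟩ := exists_coprodI_FPFactor_hom (p := p)
    (g := cyclicGen (Sum.elim (0 : Fin m → ℕ) p)) fun i =>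
      cyclicGen_pow_eq_one (q := Sum.elim (0 : Fin m → ℕ) p) (.inr i)
  exact exists_mulEquiv_of_closure_range closure_range_cyclicGen closure_range_freeProductGen
    hφ hψ

theorem exists_nielsenEquiv_extend_freeProductGen_pow (hp : ∀ i, p i ≠ 1) {n : ℕ}
    {T : Fin n → Monoid.CoprodI (FPFactor m r p)} (hT : Subgroup.closure (Set.range T) = ⊤) :
    ∃ (pos : Fin m ⊕ Fin r ↪ Fin n) (ν : Fin m ⊕ Fin r → ℕ),
      (∀ k, 0 < ν k ∧ (ν k).Coprime (Sum.elim 0 p k)) ∧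
        NielsenEquiv T (extend pos (fun k => freeProductGen m r p k ^ ν k) 1) := by
  obtain ⟨Φ, hΦ⟩ := exists_mulEquiv_cyclicGen_eq_freeProductGen m r p
  have hT' : Subgroup.closure (Set.range (Φ.symm ∘ T)) = ⊤ := by
    rw [Set.range_comp, ← MulEquiv.coe_toMonoidHom, ← MonoidHom.map_closure, hT,
      ← MonoidHom.range_eq_map, MonoidHom.range_eq_top]
    exact Φ.symm.surjective
  obtain ⟨pos, ν, hν, hTν⟩ := exists_nielsenEquiv_extend_cyclicGen_pow
    (q := Sum.elim (0 : Fin m → ℕ) p) (by simp [Sum.forall, hp]) hT'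
  refine ⟨pos, ν, hν, ?_⟩
  convert hTν.map Φ.toMonoidHom using 1
  · ext j
    simp
  · ext j
    refine Eq.trans ?_ (apply_extend Φ _ _ j).symm
    congr 1 <;> ext k <;> simp [hΦ]

theorem extend_castLE_finSumFinEquiv {G : Type*} [One G] {m r n : ℕ} (h : m + r ≤ n)
    (f : Fin m ⊕ Fin r → G) :
    extend (Fin.castLE h ∘ finSumFinEquiv) f 1 = fun i : Fin n =>
      if hm : (i : ℕ) < m then f (.inl ⟨i, hm⟩)
      else if hr : (i : ℕ) < m + r then
        f (.inr ⟨i - m, Nat.sub_lt_left_of_lt_add (not_lt.1 hm) hr⟩)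
      else 1 := by
  have hinj : Injective (Fin.castLE h ∘ finSumFinEquiv) :=
    (Fin.castLE_injective h).comp (finSumFinEquiv (m := m) (n := r)).injective
  funext i
  split_ifs with hm hr
  · rw [← hinj.extend_apply f 1]
    congr 1
  · rw [← hinj.extend_apply f 1]
    congr 1
    apply Fin.ext
    simp
    omega
  · refine extend_apply' _ _ _ ?_
    rintro ⟨k, rfl⟩
    exact hr (finSumFinEquiv k).2

end Transfer

end Grushko

/-- Every generating `n`-tuple of the free product `G = F ∗ ℤ/p₁ℤ ∗ ⋯ ∗ ℤ/p_rℤ` of a free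
group `F` with free basis `x₁,…,x_m` and finite cyclic groups of orders `p₁,…,p_r ≥ 2`
with generators `s₁,…,s_r` satisfies `n ≥ m + r`, and is Nielsen equivalent to a tuple
`(x₁,…,x_m, s₁^{ν₁},…,s_r^{ν_r}, 1,…,1)` with each `ν_i` positive and coprime to `p_i`. -/
theorem nielsen_free_product_free_and_cyclics
    (m r : ℕ) (p : Fin r → ℕ) (hp : ∀ i, 2 ≤ p i) {n : ℕ}
    (T : Fin n → Monoid.CoprodI (FPFactor m r p))
    (hT : Subgroup.closure (Set.range T) = ⊤) :
    m + r ≤ n ∧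
    ∃ ν : Fin r → ℕ, (∀ i, 0 < ν i ∧ Nat.gcd (ν i) (p i) = 1) ∧
      NielsenEquiv T (fun i : Fin n =>
        if h : (i : ℕ) < m then
          Monoid.CoprodI.of
            (show FPFactor m r p none from FreeGroup.of (⟨(i : ℕ), h⟩ : Fin m))
        else if h' : (i : ℕ) < m + r then
          (Monoid.CoprodI.of (show FPFactor m r p (some ⟨(i : ℕ) - m, by omega⟩) from
              Multiplicative.ofAdd (1 : ZMod (p ⟨(i : ℕ) - m, by omega⟩)))) ^
            ν ⟨(i : ℕ) - m, by omega⟩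
        else 1) := by
  obtain ⟨pos, ν, hν, hTν⟩ :=
    Grushko.exists_nielsenEquiv_extend_freeProductGen_pow (fun i => by have := hp i; omega) hT
  have hle : m + r ≤ n := by simpa using Fintype.card_le_of_embedding pos
  refine ⟨hle, fun i => ν (.inr i), fun i => hν (.inr i), ?_⟩
  have hone (i : Fin m) : ν (.inl i) = 1 := (Nat.coprime_zero_right _).1 (hν (.inl i)).2
  have hstd := hTν.trans <| .extend_one pos.injective
    ((Fin.castLE_injective hle).comp finSumFinEquiv.injective) _
  rw [Grushko.extend_castLE_finSumFinEquiv hle] at hstd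
  simp only [hone, pow_one] at hstd
  exact hstd
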